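/- arXiv:2211.11669 — 3 statements merged into one kernel-verified Lean document; each statement's English description precedes it below -/
import Mathlib

section
/- Let K be a field of characteristic 0, A a Lie algebra over K, V a K-vector space, Q = FreeLie(A ⊕ V)/I_A the coproduct of A and FreeLie(V), with structural Lie morphism j_A : A → Q and structural linear map ĵ_V : V → Q sending v to the class of of(0,v). Then for every K-linear Lie algebra derivation f : A → A and every K-linear map g : V → Q there exists a unique Lie algebra derivation φ : Q → Q such that φ ∘ j_A = j_A ∘ f and φ ∘ ĵ_V = g. Consequently, the derivations of Q that preserve the image j_A(A) are in bijection with pairs (f, g) consisting of a derivation f of A and a K-linear map g : V → Q. -/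
universe u

open LieAlgebra LieModule.Cohomology

section LiftDerivation

variable {K : Type*} [CommRing K] {F L : Type*} [LieRing F] [LieAlgebra K F]
  [LieRing L] [LieAlgebra K L]

/-- A linear map `d : F → L` satisfying the Leibniz rule along a Lie morphism `π : F → L`
gives a Lie morphism from `F` to the semidirect sum of `L` with its adjoint module. -/
def LieHom.prodDerivationAlong (π : F →ₗ⁅K⁆ L) (d : F →ₗ[K] L)
    (hd : ∀ x y, d ⁅x, y⁆ = ⁅π x, d y⁆ - ⁅π y, d x⁆) :
    F →ₗ⁅K⁆ ofTwoCocycle (0 : twoCocycle K L L) where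
  toFun x := ofProd _ (π x, d x)
  map_add' x y := by rw [map_add, map_add]; rfl
  map_smul' c x := by rw [map_smul, map_smul]; rfl
  map_lie' {x y} := by
    rw [bracket_ofTwoCocycle, LieHom.map_lie, hd]
    simp

variable (K L) in
/-- The projection of the semidirect sum of `L` with its adjoint module onto `L`. -/
def adjointSumFst : ofTwoCocycle (0 : twoCocycle K L L) →ₗ⁅K⁆ L where
  toFun z := ((ofProd _).symm z).1
  map_add' _ _ := rfl
  map_smul' _ _ := rfl
  map_lie' := rfl

variable (K L) in
/-- The linear projection of the semidirect sum of `L` with its adjoint module onto that module. -/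
def adjointSumSnd : ofTwoCocycle (0 : twoCocycle K L L) →ₗ[K] L where
  toFun z := ((ofProd _).symm z).2
  map_add' _ _ := rfl
  map_smul' _ _ := rfl

theorem adjointSumSnd_lie (x y : ofTwoCocycle (0 : twoCocycle K L L)) :
    adjointSumSnd K L ⁅x, y⁆ = ⁅adjointSumFst K L x, adjointSumSnd K L y⁆ -
      ⁅adjointSumFst K L y, adjointSumSnd K L x⁆ := by
  rw [bracket_ofTwoCocycle]
  simp only [ZeroMemClass.coe_zero, LinearMap.zero_apply, zero_add]
  rfl

end LiftDerivation

section FreeLie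

variable {K : Type u} [CommRing K] {W : Type u} [AddCommGroup W] [Module K W]
  {F : Type u} [LieRing F] [LieAlgebra K F] {of : W →ₗ[K] F}
  {L : Type u} [LieRing L] [LieAlgebra K L]

/-- A linear map on the generators of a free Lie algebra extends to a linear map satisfying the
Leibniz rule along a given Lie morphism. -/
theorem exists_derivationAlong_of_free
    (hF : ∀ (N : Type u) [LieRing N] [LieAlgebra K N] (g : W →ₗ[K] N),
      ∃! ψ : F →ₗ⁅K⁆ N, ∀ w : W, ψ (of w) = g w)
    (π : F →ₗ⁅K⁆ L) (d₀ : W →ₗ[K] L) :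
    ∃ d : F →ₗ[K] L, (∀ x y, d ⁅x, y⁆ = ⁅π x, d y⁆ - ⁅π y, d x⁆) ∧ ∀ w, d (of w) = d₀ w := by
  let E := ofTwoCocycle (0 : twoCocycle K L L)
  let g : W →ₗ[K] E :=
    { toFun := fun w => ofProd _ (π (of w), d₀ w)
      map_add' := fun x y => by rw [map_add, map_add, map_add]; rfl
      map_smul' := fun c x => by rw [map_smul, map_smul, map_smul]; rfl }
  obtain ⟨ψ, hψ, -⟩ := hF E g
  have hp : (adjointSumFst K L).comp ψ = π := by
    refine (hF L ((π : F →ₗ[K] L) ∘ₗ of)).unique (fun w => ?_) fun w => rfl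
    exact congrArg (adjointSumFst K L) (hψ w)
  refine ⟨adjointSumSnd K L ∘ₗ (ψ : F →ₗ[K] E), fun x y => ?_, fun w => ?_⟩
  · subst hp
    exact (congrArg (adjointSumSnd K L) (ψ.map_lie x y)).trans (adjointSumSnd_lie _ _)
  · exact congrArg (adjointSumSnd K L) (hψ w)

/-- Two linear maps satisfying the Leibniz rule along the same Lie morphism agree if they agree on
the generators of a free Lie algebra. -/
theorem derivationAlong_ext_of_free
    (hF : ∀ (N : Type u) [LieRing N] [LieAlgebra K N] (g : W →ₗ[K] N),
      ∃! ψ : F →ₗ⁅K⁆ N, ∀ w : W, ψ (of w) = g w)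
    (π : F →ₗ⁅K⁆ L) {d₁ d₂ : F →ₗ[K] L}
    (h₁ : ∀ x y, d₁ ⁅x, y⁆ = ⁅π x, d₁ y⁆ - ⁅π y, d₁ x⁆)
    (h₂ : ∀ x y, d₂ ⁅x, y⁆ = ⁅π x, d₂ y⁆ - ⁅π y, d₂ x⁆)
    (h : ∀ w, d₁ (of w) = d₂ (of w)) : d₁ = d₂ := by
  have key : π.prodDerivationAlong d₁ h₁ = π.prodDerivationAlong d₂ h₂ := by
    refine (hF _ ((π.prodDerivationAlong d₂ h₂ : F →ₗ[K] _) ∘ₗ of)).unique (fun w => ?_)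
      fun w => rfl
    change ofProd _ (π (of w), d₁ (of w)) = ofProd _ (π (of w), d₂ (of w))
    rw [h]
  ext x
  exact congrArg (adjointSumSnd K L) (LieHom.congr_fun key x)

end FreeLie

/-- with `Q = FLAV ⧸ I_A` the coproduct of a Lie algebra `A` and the free
Lie algebra on a vector space `V` (notation as in the paper: `FLAV` is the free Lie
algebra on `A ⊕ V`, `I_A` the ideal identifying the two brackets of `A`,
`j_A a = [ofAV (a,0)]` and `ĵ_V v = [ofAV (0,v)]`), for every Lie algebra derivation
`f : A → A` and every linear map `g : V → Q` there is a unique Lie algebra derivation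
`φ : Q → Q` with `φ ∘ j_A = j_A ∘ f` and `φ ∘ ĵ_V = g`.  Consequently, the derivations
of `Q` preserving the image of `j_A` are in bijection with pairs `(f, g)`. -/
theorem statement6 (K : Type u) [Field K] [CharZero K]
    (A : Type u) [LieRing A] [LieAlgebra K A]
    (V : Type u) [AddCommGroup V] [Module K V]
    (FLAV : Type u) [LieRing FLAV] [LieAlgebra K FLAV] (ofAV : A × V →ₗ[K] FLAV)
    (hunivAV : ∀ (N : Type u) [LieRing N] [LieAlgebra K N] (g : A × V →ₗ[K] N),
      ∃! ψ : FLAV →ₗ⁅K⁆ N, ∀ w : A × V, ψ (ofAV w) = g w)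
    (IA : LieIdeal K FLAV)
    (hIA : IA = LieSubmodule.lieSpan K FLAV
      { x : FLAV | ∃ a b : A, x = ⁅ofAV (a, 0), ofAV (b, 0)⁆ - ofAV (⁅a, b⁆, 0) }) :
    (∀ (f : LieDerivation K A A) (g : V →ₗ[K] FLAV ⧸ IA),
      ∃! φ : LieDerivation K (FLAV ⧸ IA) (FLAV ⧸ IA),
        (∀ a : A, φ (LieSubmodule.Quotient.mk' IA (ofAV (a, 0))) =
          LieSubmodule.Quotient.mk' IA (ofAV (f a, 0)))
        ∧ ∀ v : V, φ (LieSubmodule.Quotient.mk' IA (ofAV (0, v))) = g v)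
    ∧ ∃ e : (LieDerivation K A A × (V →ₗ[K] FLAV ⧸ IA)) ≃
        { φ : LieDerivation K (FLAV ⧸ IA) (FLAV ⧸ IA) //
          ∀ a : A, ∃ b : A, φ (LieSubmodule.Quotient.mk' IA (ofAV (a, 0))) =
            LieSubmodule.Quotient.mk' IA (ofAV (b, 0)) },
      ∀ p : LieDerivation K A A × (V →ₗ[K] FLAV ⧸ IA),
        (∀ a : A, (e p).val (LieSubmodule.Quotient.mk' IA (ofAV (a, 0))) =
          LieSubmodule.Quotient.mk' IA (ofAV (p.1 a, 0)))
        ∧ ∀ v : V, (e p).val (LieSubmodule.Quotient.mk' IA (ofAV (0, v))) = p.2 v := by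
  let π : FLAV →ₗ⁅K⁆ FLAV ⧸ IA :=
    { (LieSubmodule.Quotient.mk' IA : FLAV →ₗ[K] FLAV ⧸ IA) with map_lie' := fun {_ _} => rfl }
  have hπ : ∀ x, LieSubmodule.Quotient.mk' IA x = π x := fun _ => rfl
  have hπs : Function.Surjective π := LieSubmodule.Quotient.surjective_mk' IA
  have hπz : ∀ x ∈ IA, π x = 0 := fun x hx => (LieSubmodule.Quotient.mk_eq_zero IA).2 hx
  have hrel : ∀ a b : A, π (ofAV (⁅a, b⁆, 0)) = ⁅π (ofAV (a, 0)), π (ofAV (b, 0))⁆ := by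
    intro a b
    rw [← LieHom.map_lie, eq_comm, ← sub_eq_zero, ← map_sub]
    exact hπz _ (hIA ▸ LieSubmodule.subset_lieSpan ⟨a, b, rfl⟩)
  have hsplit : ∀ w : A × V, ofAV w = ofAV (w.1, 0) + ofAV (0, w.2) := by
    intro w
    rw [← map_add]
    simp
  simp only [hπ]
  have huniq : ∀ φ₁ φ₂ : LieDerivation K (FLAV ⧸ IA) (FLAV ⧸ IA),
      (∀ a, φ₁ (π (ofAV (a, 0))) = φ₂ (π (ofAV (a, 0)))) →
      (∀ v, φ₁ (π (ofAV (0, v))) = φ₂ (π (ofAV (0, v)))) → φ₁ = φ₂ := by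
    intro φ₁ φ₂ hA hV
    have hleib : ∀ (φ : LieDerivation K (FLAV ⧸ IA) (FLAV ⧸ IA)) (x y : FLAV),
        ((φ : FLAV ⧸ IA →ₗ[K] FLAV ⧸ IA) ∘ₗ (π : FLAV →ₗ[K] FLAV ⧸ IA)) ⁅x, y⁆ =
          ⁅π x, φ (π y)⁆ - ⁅π y, φ (π x)⁆ := by
      intro φ x y
      change φ (π ⁅x, y⁆) = _
      rw [LieHom.map_lie, LieDerivation.apply_lie_eq_sub]
    have key := derivationAlong_ext_of_free hunivAV π (hleib φ₁) (hleib φ₂) fun w => by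
      change φ₁ (π (ofAV w)) = φ₂ (π (ofAV w))
      simp only [hsplit w, map_add, hA, hV]
    ext q
    obtain ⟨x, rfl⟩ := hπs q
    exact LinearMap.congr_fun key x
  have hex : ∀ (f : LieDerivation K A A) (g : V →ₗ[K] FLAV ⧸ IA),
      ∃ φ : LieDerivation K (FLAV ⧸ IA) (FLAV ⧸ IA),
        (∀ a : A, φ (π (ofAV (a, 0))) = π (ofAV (f a, 0))) ∧
          ∀ v : V, φ (π (ofAV (0, v))) = g v := by
    intro f g
    obtain ⟨d, hd, hdof⟩ := exists_derivationAlong_of_free hunivAV π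
      (((π : FLAV →ₗ[K] FLAV ⧸ IA) ∘ₗ ofAV ∘ₗ LinearMap.inl K A V ∘ₗ (f : A →ₗ[K] A)).coprod g)
    have hdA : ∀ a, d (ofAV (a, 0)) = π (ofAV (f a, 0)) := fun a => by simp [hdof]
    have hdV : ∀ v, d (ofAV (0, v)) = g v := fun v => by
      simp [hdof, ← Prod.zero_eq_mk]
    have hker : ∀ x ∈ IA, d x = 0 := by
      intro x hx
      rw [hIA] at hx
      induction hx using LieSubmodule.lieSpan_induction with
      | mem x hx =>
        obtain ⟨a, b, rfl⟩ := hx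
        rw [map_sub, hd, hdA, hdA, hdA, LieDerivation.apply_lie_eq_sub, ← hrel, ← hrel,
          ← map_sub, ← map_sub, ← map_sub, ← map_sub]
        simp
      | zero => exact map_zero d
      | add x y _ _ hx hy => rw [map_add, hx, hy, add_zero]
      | smul c x _ hx => rw [map_smul, hx, smul_zero]
      | lie x y hy' hy => rw [hd, hy, hπz y (hIA ▸ hy'), lie_zero, zero_lie, sub_zero]
    let D : (FLAV ⧸ IA) →ₗ[K] FLAV ⧸ IA := IA.toSubmodule.liftQ d hker
    have hD : ∀ x, D (π x) = d x := fun x => rfl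
    refine ⟨⟨D, fun p q => ?_⟩, fun a => hdA a, fun v => hdV v⟩
    obtain ⟨x, rfl⟩ := hπs p
    obtain ⟨y, rfl⟩ := hπs q
    rw [← LieHom.map_lie, hD, hD, hD, hd]
  obtain ⟨ρ, hρ, hρA⟩ : ∃ ρ : FLAV ⧸ IA →ₗ[K] A, (∀ x y, ρ ⁅x, y⁆ = ⁅ρ x, ρ y⁆) ∧
      ∀ a, ρ (π (ofAV (a, 0))) = a := by
    obtain ⟨ψ, hψ, -⟩ := hunivAV A (LinearMap.fst K A V)
    have hle : IA ≤ ψ.ker := by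
      rw [hIA, LieSubmodule.lieSpan_le]
      rintro _ ⟨a, b, rfl⟩
      simp [hψ]
    have hker : ∀ x ∈ IA, ψ x = 0 := fun x hx => LieHom.mem_ker.1 (hle hx)
    refine ⟨IA.toSubmodule.liftQ (ψ : FLAV →ₗ[K] A) hker, fun p q => ?_, fun a => hψ (a, 0)⟩
    obtain ⟨x, rfl⟩ := hπs p
    obtain ⟨y, rfl⟩ := hπs q
    exact ψ.map_lie x y
  refine ⟨fun f g => ?_, ?_⟩
  · obtain ⟨φ, hA, hV⟩ := hex f g
    exact ⟨φ, ⟨hA, hV⟩, fun φ' h => huniq _ _ (fun a => by rw [h.1, hA]) fun v => by rw [h.2, hV]⟩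
  · choose Φ hΦA hΦV using hex
    refine ⟨Equiv.ofBijective (fun p => ⟨Φ p.1 p.2, fun a => ⟨p.1 a, hΦA _ _ a⟩⟩) ⟨?_, ?_⟩,
      fun p => ⟨hΦA _ _, hΦV _ _⟩⟩
    · rintro ⟨f, g⟩ ⟨f', g'⟩ h
      have h' : Φ f g = Φ f' g' := congrArg Subtype.val h
      refine Prod.ext (LieDerivation.ext fun a => ?_) (LinearMap.ext fun v => ?_)
      · rw [← hρA (f a), ← hρA (f' a), ← hΦA f g, ← hΦA f' g', h']
      · rw [← hΦV f g, ← hΦV f' g', h']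
    · rintro ⟨φ, hφ⟩
      let f : LieDerivation K A A :=
        { toLinearMap := ρ ∘ₗ (φ : FLAV ⧸ IA →ₗ[K] FLAV ⧸ IA) ∘ₗ (π : FLAV →ₗ[K] FLAV ⧸ IA) ∘ₗ ofAV ∘ₗ
            LinearMap.inl K A V
          leibniz' := fun a b => by
            change ρ (φ (π (ofAV (⁅a, b⁆, 0)))) =
              ⁅a, ρ (φ (π (ofAV (b, 0))))⁆ - ⁅b, ρ (φ (π (ofAV (a, 0))))⁆
            rw [hrel, LieDerivation.apply_lie_eq_sub, map_sub, hρ, hρ, hρA, hρA] }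
      let g : V →ₗ[K] FLAV ⧸ IA :=
        (φ : FLAV ⧸ IA →ₗ[K] FLAV ⧸ IA) ∘ₗ (π : FLAV →ₗ[K] FLAV ⧸ IA) ∘ₗ ofAV ∘ₗ LinearMap.inr K A V
      refine ⟨(f, g), Subtype.ext (huniq _ _ (fun a => ?_) fun v => hΦV f g v)⟩
      obtain ⟨b, hb⟩ := hφ a
      refine (hΦA f g a).trans ?_
      change π (ofAV (ρ (φ (π (ofAV (a, 0)))), 0)) = φ (π (ofAV (a, 0)))
      simp only [hπ] at hb
      rw [hb, hρA]
end

section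
/- Let M be a complete and cocomplete category equipped with a left pre-model structure (W, F, C', CW'). Then there exists a model structure on M whose weak equivalences are exactly the maps in W and whose fibrations are exactly the maps in F; in this model structure the cofibrations are precisely the retracts of maps in C' and the trivial cofibrations are precisely the retracts of maps in CW'. Moreover, this is the unique model structure on M with weak equivalences W and fibrations F. -/
open CategoryTheory

universe v u

variable {M : Type u} [Category.{v} M]

/-- `f` is a retract of `g` in the arrow category. -/
def IsRetractOfMap {A B C D : M} (f : A ⟶ B) (g : C ⟶ D) : Prop :=
  ∃ (i : A ⟶ C) (r : C ⟶ A) (i' : B ⟶ D) (r' : D ⟶ B),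
    i ≫ r = 𝟙 A ∧ i' ≫ r' = 𝟙 B ∧ i ≫ g = f ≫ i' ∧ g ≫ r' = r ≫ f

/-- A class of morphisms is closed under retracts. -/
def RetractClosed (P : MorphismProperty M) : Prop :=
  ∀ ⦃A B C D : M⦄ (f : A ⟶ B) (g : C ⟶ D), IsRetractOfMap f g → P g → P f

/-- The 2-out-of-3 property for a class of morphisms. -/
def TwoOutOfThree (W : MorphismProperty M) : Prop :=
  ∀ ⦃X Y Z : M⦄ (f : X ⟶ Y) (g : Y ⟶ Z),
    (W f → W g → W (f ≫ g)) ∧ (W f → W (f ≫ g) → W g) ∧ (W g → W (f ≫ g) → W f)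

/-- A model structure on `M` with weak equivalences `W`, fibrations `F`, cofibrations
`C`: axioms (M1)–(M4) of the paper. -/
structure IsModelStructure (W F C : MorphismProperty M) : Prop where
  two_out_of_three : TwoOutOfThree W
  retract_W : RetractClosed W
  retract_F : RetractClosed F
  retract_C : RetractClosed C
  lift_C_FW : ∀ ⦃A B X Y : M⦄ (i : A ⟶ B) (p : X ⟶ Y),
    C i → F p → W p → HasLiftingProperty i p
  lift_CW_F : ∀ ⦃A B X Y : M⦄ (i : A ⟶ B) (p : X ⟶ Y),
    C i → W i → F p → HasLiftingProperty i p
  fact_CW_F : ∀ ⦃X Y : M⦄ (g : X ⟶ Y),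
    ∃ (Z : M) (j : X ⟶ Z) (q : Z ⟶ Y), C j ∧ W j ∧ F q ∧ j ≫ q = g
  fact_C_FW : ∀ ⦃X Y : M⦄ (g : X ⟶ Y),
    ∃ (Z : M) (i : X ⟶ Z) (p : Z ⟶ Y), C i ∧ F p ∧ W p ∧ i ≫ p = g

/-- A left pre-model structure `(W, F, C', CW')` on `M`: axioms (L1)–(L5). -/
structure IsLeftPreModel (W F C' CW' : MorphismProperty M) : Prop where
  two_out_of_three : TwoOutOfThree W
  retract_W : RetractClosed W
  retract_F : RetractClosed F
  cw'_subset_w : ∀ ⦃X Y : M⦄ (f : X ⟶ Y), CW' f → W f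
  lift_C'_FW : ∀ ⦃A B X Y : M⦄ (i : A ⟶ B) (p : X ⟶ Y),
    C' i → F p → W p → HasLiftingProperty i p
  lift_CW'_F : ∀ ⦃A B X Y : M⦄ (i : A ⟶ B) (p : X ⟶ Y),
    CW' i → F p → HasLiftingProperty i p
  fact_CW'_F : ∀ ⦃X Y : M⦄ (g : X ⟶ Y),
    ∃ (Z : M) (j : X ⟶ Z) (q : Z ⟶ Y), CW' j ∧ F q ∧ j ≫ q = g
  fact_C'_FW : ∀ ⦃X Y : M⦄ (g : X ⟶ Y),
    ∃ (Z : M) (i : X ⟶ Z) (p : Z ⟶ Y), C' i ∧ F p ∧ W p ∧ i ≫ p = g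

theorem IsRetractOfMap.hasLiftingProperty {A B C D X Y : M} {f : A ⟶ B} {g : C ⟶ D}
    (h : IsRetractOfMap f g) (p : X ⟶ Y) [HasLiftingProperty g p] :
    HasLiftingProperty f p := by
  obtain ⟨i, r, i', r', hi, hi', hl, hr⟩ := h
  refine ⟨fun {a b} sq => ?_⟩
  have sq' : CommSq (r ≫ a) g p (r' ≫ b) :=
    ⟨by rw [Category.assoc, sq.w, ← Category.assoc, ← hr, Category.assoc]⟩
  refine ⟨⟨⟨i' ≫ sq'.lift, ?_, ?_⟩⟩⟩
  · rw [← Category.assoc, ← hl, Category.assoc, sq'.fac_left, ← Category.assoc, hi,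
      Category.id_comp]
  · rw [Category.assoc, sq'.fac_right, ← Category.assoc, hi', Category.id_comp]

/-- The retract argument: if `i ≫ p` lifts against `p`, then it is a retract of `i`. -/
theorem isRetractOfMap_comp_of_hasLiftingProperty {A B Z : M} (i : A ⟶ Z) (p : Z ⟶ B)
    [HasLiftingProperty (i ≫ p) p] : IsRetractOfMap (i ≫ p) i := by
  have sq : CommSq i (i ≫ p) p (𝟙 B) := ⟨by simp⟩
  exact ⟨𝟙 A, 𝟙 A, sq.lift, p, by simp, sq.fac_right, by simp, by simp⟩

namespace IsLeftPreModel

variable {W F C' CW' : MorphismProperty M}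

theorem llp_iff_retract (h : IsLeftPreModel W F C' CW') {A B : M} (f : A ⟶ B) :
    (F ⊓ W).llp f ↔ ∃ (X Y : M) (g : X ⟶ Y), C' g ∧ IsRetractOfMap f g := by
  constructor
  · intro hf
    obtain ⟨Z, i, p, hi, hpF, hpW, rfl⟩ := h.fact_C'_FW f
    have := hf p ⟨hpF, hpW⟩
    exact ⟨_, _, i, hi, isRetractOfMap_comp_of_hasLiftingProperty i p⟩
  · rintro ⟨X, Y, g, hg, hfg⟩ U V p ⟨hpF, hpW⟩
    have := h.lift_C'_FW g p hg hpF hpW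
    exact hfg.hasLiftingProperty p

theorem llp_and_weakEquivalence_iff_retract (h : IsLeftPreModel W F C' CW') {A B : M}
    (f : A ⟶ B) :
    ((F ⊓ W).llp f ∧ W f) ↔ ∃ (X Y : M) (g : X ⟶ Y), CW' g ∧ IsRetractOfMap f g := by
  constructor
  · rintro ⟨hf, hfW⟩
    obtain ⟨Z, j, q, hj, hq, rfl⟩ := h.fact_CW'_F f
    have := hf q ⟨hq, (h.two_out_of_three j q).2.1 (h.cw'_subset_w j hj) hfW⟩
    exact ⟨_, _, j, hj, isRetractOfMap_comp_of_hasLiftingProperty j q⟩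
  · rintro ⟨X, Y, g, hg, hfg⟩
    refine ⟨fun U V p hp => ?_, h.retract_W f g hfg (h.cw'_subset_w g hg)⟩
    have := h.lift_CW'_F g p hg hp.1
    exact hfg.hasLiftingProperty p

theorem isModelStructure_llp (h : IsLeftPreModel W F C' CW') :
    IsModelStructure W F (F ⊓ W).llp where
  two_out_of_three := h.two_out_of_three
  retract_W := h.retract_W
  retract_F := h.retract_F
  retract_C _ _ _ _ _ _ hfg hg _ _ p hp :=
    have := hg p hp
    hfg.hasLiftingProperty p
  lift_C_FW _ _ _ _ _ p hi hpF hpW := hi p ⟨hpF, hpW⟩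
  lift_CW_F _ _ _ _ i p hi hiW hp := by
    obtain ⟨_, _, g, hg, hig⟩ := (h.llp_and_weakEquivalence_iff_retract i).1 ⟨hi, hiW⟩
    have := h.lift_CW'_F g p hg hp
    exact hig.hasLiftingProperty p
  fact_CW_F _ _ g := by
    obtain ⟨Z, j, q, hj, hq, hjq⟩ := h.fact_CW'_F g
    exact ⟨Z, j, q, fun _ _ p hp => h.lift_CW'_F j p hj hp.1, h.cw'_subset_w j hj, hq, hjq⟩
  fact_C_FW _ _ g := by
    obtain ⟨Z, i, p, hi, hpF, hpW, hip⟩ := h.fact_C'_FW g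
    exact ⟨Z, i, p, fun _ _ q hq => h.lift_C'_FW i q hi hq.1 hq.2, hpF, hpW, hip⟩

end IsLeftPreModel

/-- The cofibrations are determined by the weak equivalences and the fibrations. -/
theorem IsModelStructure.eq_llp {W F C : MorphismProperty M} (h : IsModelStructure W F C) :
    C = (F ⊓ W).llp := by
  ext A B f
  constructor
  · exact fun hf _ _ p hp => h.lift_C_FW f p hf hp.1 hp.2
  · intro hf
    obtain ⟨Z, i, p, hi, hpF, hpW, rfl⟩ := h.fact_C_FW f
    have := hf p ⟨hpF, hpW⟩
    exact h.retract_C _ i (isRetractOfMap_comp_of_hasLiftingProperty i p) hi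

/-- a left pre-model structure `(W, F, C', CW')` on a complete and
cocomplete category `M` extends to a unique model structure with weak equivalences `W`
and fibrations `F`; its cofibrations are precisely the retracts of maps in `C'`, and
its trivial cofibrations are precisely the retracts of maps in `CW'`. -/
theorem statement12 [Limits.HasLimits M] [Limits.HasColimits M]
    (W F C' CW' : MorphismProperty M) (h : IsLeftPreModel W F C' CW') :
    ∃ C : MorphismProperty M,
      IsModelStructure W F C
      ∧ (∀ ⦃A B : M⦄ (f : A ⟶ B),
          C f ↔ ∃ (X Y : M) (g : X ⟶ Y), C' g ∧ IsRetractOfMap f g)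
      ∧ (∀ ⦃A B : M⦄ (f : A ⟶ B),
          (C f ∧ W f) ↔ ∃ (X Y : M) (g : X ⟶ Y), CW' g ∧ IsRetractOfMap f g)
      ∧ ∀ C₂ : MorphismProperty M, IsModelStructure W F C₂ → C₂ = C := by
  exact ⟨(F ⊓ W).llp, h.isModelStructure_llp, fun _ _ f => h.llp_iff_retract f,
    fun _ _ f => h.llp_and_weakEquivalence_iff_retract f, fun _ h₂ => h₂.eq_llp⟩
end

section
/- Let C be a K-vector space and Δ : C → C ⊗ C a coassociative K-linear map. Then for every n ≥ 1, Δ maps ker Δⁿ into the image of (ker Δ^{n−1}) ⊗ (ker Δ^{n−1}) inside C ⊗ C: Δ(ker Δⁿ) ⊆ ker Δ^{n−1} ⊗ ker Δ^{n−1}. -/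
open scoped TensorProduct

noncomputable section

/-- The iterated tensor power `C^{⊗(n+1)}`: `cpow K C 0 = C` and
`cpow K C (n+1) = C ⊗ cpow K C n`, bundled as objects of `ModuleCat K` so that the
module instances are available. -/
def cpow (K : Type) [Field K] (C : Type) [AddCommGroup C] [Module K C] :
    ℕ → ModuleCat K
  | 0 => ModuleCat.of K C
  | n + 1 => ModuleCat.of K (C ⊗[K] cpow K C n)

/-- The iterated coproducts `Δⁿ : C →ₗ[K] C^{⊗(n+1)}`, defined by `Δ⁰ = Id` and
`Δⁿ = (Id_C ⊗ Δ^{n-1}) ∘ Δ`. -/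
def iterDelta (K : Type) [Field K] (C : Type) [AddCommGroup C] [Module K C]
    (Δ : C →ₗ[K] C ⊗[K] C) : (n : ℕ) → (C →ₗ[K] cpow K C n)
  | 0 => LinearMap.id
  | n + 1 =>
      (show C ⊗[K] cpow K C n →ₗ[K] cpow K C (n + 1) from LinearMap.id).comp
        ((TensorProduct.map LinearMap.id (iterDelta K C Δ n)).comp Δ)

/-- Over a field, the intersection of `ker (id ⊗ f)` and `ker (f ⊗ id)` is contained in the image
of `ker f ⊗ ker f`. -/
theorem TensorProduct.mem_range_map_ker_subtype {K V W : Type*} [Field K]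
    [AddCommGroup V] [Module K V] [AddCommGroup W] [Module K W] (f : V →ₗ[K] W) {z : V ⊗[K] V}
    (hl : f.lTensor V z = 0) (hr : f.rTensor V z = 0) :
    z ∈ LinearMap.range
      (TensorProduct.map (LinearMap.ker f).subtype (LinearMap.ker f).subtype) := by
  obtain ⟨w, rfl⟩ := (Module.Flat.lTensor_exact V f.exact_subtype_ker_map z).1 hl
  have hw : f.rTensor (LinearMap.ker f) w = 0 := by
    apply Module.Flat.lTensor_preserves_injective_linearMap (M := W)
      (LinearMap.ker f).subtype (LinearMap.ker f).subtype_injective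
    rw [map_zero, ← hr, ← LinearMap.comp_apply, ← LinearMap.comp_apply,
      LinearMap.lTensor_comp_rTensor, LinearMap.rTensor_comp_lTensor]
  obtain ⟨u, rfl⟩ := (Module.Flat.rTensor_exact (LinearMap.ker f) f.exact_subtype_ker_map w).1 hw
  exact ⟨u, by rw [← LinearMap.comp_apply, LinearMap.lTensor_comp_rTensor]⟩

/-- If `Δ` is coassociative and `(f ⊗ id) ∘ Δ` factors through `(id ⊗ f) ∘ Δ`, then the same holds
for `(id ⊗ f) ∘ Δ` in place of `f`. -/
theorem exists_rTensor_comp_eq_of_coassoc {K C W : Type*} [Field K]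
    [AddCommGroup C] [Module K C] [AddCommGroup W] [Module K W] {Δ : C →ₗ[K] C ⊗[K] C}
    (hco : (TensorProduct.map Δ LinearMap.id).comp Δ =
      ((TensorProduct.assoc K C C C).symm.toLinearMap).comp
        ((TensorProduct.map LinearMap.id Δ).comp Δ))
    {f : C →ₗ[K] W} {e : C ⊗[K] W →ₗ[K] W ⊗[K] C}
    (he : f.rTensor C ∘ₗ Δ = e ∘ₗ f.lTensor C ∘ₗ Δ) :
    ∃ e' : C ⊗[K] (C ⊗[K] W) →ₗ[K] (C ⊗[K] W) ⊗[K] C,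
      (f.lTensor C ∘ₗ Δ).rTensor C ∘ₗ Δ = e' ∘ₗ (f.lTensor C ∘ₗ Δ).lTensor C ∘ₗ Δ := by
  refine ⟨(TensorProduct.assoc K C W C).symm.toLinearMap ∘ₗ e.lTensor C, ?_⟩
  have hassoc : (f.lTensor C).rTensor C ∘ₗ (TensorProduct.assoc K C C C).symm.toLinearMap =
      (TensorProduct.assoc K C W C).symm.toLinearMap ∘ₗ (f.rTensor C).lTensor C := by
    ext; simp
  calc (f.lTensor C ∘ₗ Δ).rTensor C ∘ₗ Δ
      = (f.lTensor C).rTensor C ∘ₗ (TensorProduct.map Δ LinearMap.id ∘ₗ Δ) := by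
        rw [LinearMap.rTensor_comp, LinearMap.comp_assoc]; rfl
    _ = (TensorProduct.assoc K C W C).symm.toLinearMap ∘ₗ (f.rTensor C ∘ₗ Δ).lTensor C ∘ₗ Δ := by
        rw [hco, ← LinearMap.comp_assoc, hassoc, LinearMap.lTensor_comp]; rfl
    _ = _ := by
        rw [he, LinearMap.lTensor_comp]; rfl

/-- For coassociative `Δ`, the map `(Δⁿ ⊗ id) ∘ Δ` factors through `(id ⊗ Δⁿ) ∘ Δ`. -/
theorem exists_rTensor_iterDelta_comp_eq (K : Type) [Field K]
    (C : Type) [AddCommGroup C] [Module K C] (Δ : C →ₗ[K] C ⊗[K] C)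
    (hco : (TensorProduct.map Δ LinearMap.id).comp Δ =
      ((TensorProduct.assoc K C C C).symm.toLinearMap).comp
        ((TensorProduct.map LinearMap.id Δ).comp Δ)) (n : ℕ) :
    ∃ e : C ⊗[K] cpow K C n →ₗ[K] cpow K C n ⊗[K] C,
      (iterDelta K C Δ n).rTensor C ∘ₗ Δ = e ∘ₗ (iterDelta K C Δ n).lTensor C ∘ₗ Δ := by
  induction n with
  | zero =>
    refine ⟨(LinearMap.id : C ⊗[K] C →ₗ[K] C ⊗[K] C), ?_⟩
    change (LinearMap.id : C →ₗ[K] C).rTensor C ∘ₗ Δ =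
      LinearMap.id ∘ₗ (LinearMap.id : C →ₗ[K] C).lTensor C ∘ₗ Δ
    rw [LinearMap.rTensor_id, LinearMap.lTensor_id, LinearMap.id_comp, LinearMap.id_comp]
  | succ n ih =>
    obtain ⟨e, he⟩ := ih
    exact exists_rTensor_comp_eq_of_coassoc hco he

/-- for a coassociative `Δ : C → C ⊗ C` and every `n ≥ 1`,
`Δ` maps `ker Δⁿ` into the image of `(ker Δ^{n-1}) ⊗ (ker Δ^{n-1})` inside `C ⊗ C`
(stated with `n + 1` in place of `n`, so that `n - 1` becomes `n`). -/
theorem statement13 (K : Type) [Field K] [CharZero K]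
    (C : Type) [AddCommGroup C] [Module K C]
    (Δ : C →ₗ[K] C ⊗[K] C)
    (hco : (TensorProduct.map Δ LinearMap.id).comp Δ =
      ((TensorProduct.assoc K C C C).symm.toLinearMap).comp
        ((TensorProduct.map LinearMap.id Δ).comp Δ)) :
    ∀ n : ℕ,
      Submodule.map Δ (LinearMap.ker (iterDelta K C Δ (n + 1))) ≤
        LinearMap.range (TensorProduct.map
          (LinearMap.ker (iterDelta K C Δ n)).subtype
          (LinearMap.ker (iterDelta K C Δ n)).subtype) := by
  rintro n _ ⟨x, hx, rfl⟩
  have hl : (iterDelta K C Δ n).lTensor C (Δ x) = 0 := hx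
  obtain ⟨e, he⟩ := exists_rTensor_iterDelta_comp_eq K C Δ hco n
  refine TensorProduct.mem_range_map_ker_subtype _ hl ?_
  have hr := LinearMap.congr_fun he x
  simp only [LinearMap.comp_apply] at hr
  rw [hr, hl, map_zero]

end
end
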